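/- For every coalition C ⊆ AG and all formulas φ, ψ ∈ Φ, the formula ⟨C⟩(φ∨ψ) → (⟨C⟩φ ∨ ⟨AG⟩ψ) holds at every state of every deterministic general concurrent game model. -/

import Mathlib

/-!
Suppose a joint action `σ` of `C` forces `φ ∨ ψ`. If every outcome of `σ` satisfies `φ`, then `σ`
witnesses `⟨C⟩φ`. Otherwise some outcome `t` of `σ` satisfies `ψ`; it is an outcome of an action
profile `τ` extending `σ`, and by determinism `t` is the only outcome of `τ`, so `τ` witnesses
`⟨AG⟩ψ`.
-/

namespace CL

/-- The language Φ of coalition logic over a set of agents, with atomic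
propositions drawn from ℕ (a countable set). -/
inductive Formula (Agent : Type) : Type
  | top : Formula Agent
  | atom : ℕ → Formula Agent
  | neg : Formula Agent → Formula Agent
  | and : Formula Agent → Formula Agent → Formula Agent
  | coal : Set Agent → Formula Agent → Formula Agent

namespace Formula

variable {Agent : Type}

def bot : Formula Agent := neg top

def or (φ ψ : Formula Agent) : Formula Agent := neg (and (neg φ) (neg ψ))

def imp (φ ψ : Formula Agent) : Formula Agent := or (neg φ) ψ

def iff (φ ψ : Formula Agent) : Formula Agent := and (imp φ ψ) (imp ψ φ)

end Formula

/-- The three frame properties: seriality, independence of agents, determinism.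
`ES` is represented by `Set P3`, the eight subsets of {S, I, D}. -/
inductive P3 : Type
  | S | I | D
deriving DecidableEq
section
open Classical

/-- Merge of two joint actions of disjoint coalitions. -/
noncomputable def jaUnion {Agent Act : Type} {C D : Set Agent}
    (σC : C → Act) (σD : D → Act) : ↥(C ∪ D) → Act :=
  fun a =>
    if h : a.1 ∈ C then σC ⟨a.1, h⟩
    else σD ⟨a.1, ((Set.mem_union _ _ _).mp a.2).resolve_left h⟩

end

/-- A general concurrent game frame: a nonempty set of states, a nonempty set
of actions, and an outcome function for the grand coalition.  Joint actions of
a coalition C are functions C → Act; action profiles are functions Agent → Act. -/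
structure Frame (Agent : Type) where
  State : Type
  state_nonempty : Nonempty State
  Act : Type
  act_nonempty : Nonempty Act
  out : State → (Agent → Act) → Set State

namespace Frame

variable {Agent : Type} (F : Frame Agent)

/-- Outcome function for a coalition C. -/
def outC (C : Set Agent) (s : F.State) (σ : C → F.Act) : Set F.State :=
  ⋃ (τ : Agent → F.Act) (_ : ∀ a : C, τ a.1 = σ a), F.out s τ

/-- Availability function: the available joint actions of C at s. -/
def aja (C : Set Agent) (s : F.State) : Set (C → F.Act) :=
  {σ | (F.outC C s σ).Nonempty}

def Serial : Prop := ∀ (s : F.State) (C : Set Agent), (F.aja C s).Nonempty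

def Independent : Prop :=
  ∀ (s : F.State) (C D : Set Agent), C ∩ D = ∅ →
    ∀ σC ∈ F.aja C s, ∀ σD ∈ F.aja D s, jaUnion σC σD ∈ F.aja (C ∪ D) s

def Deterministic : Prop :=
  ∀ s : F.State, ∀ σ ∈ F.aja Set.univ s, ∃ t : F.State, F.outC Set.univ s σ = {t}

end Frame

/-- A general concurrent game model: a frame together with a labeling function
(atomic propositions are drawn from the countable set ℕ). -/
structure Model (Agent : Type) extends Frame Agent where
  lab : State → Set ℕ

namespace Model

variable {Agent : Type} (M : Model Agent)

/-- Satisfaction: M, s ⊨ φ. -/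
def sat : Formula Agent → M.State → Prop
  | .top, _ => True
  | .atom n, s => n ∈ M.lab s
  | .neg φ, s => ¬ sat φ s
  | .and φ ψ, s => sat φ s ∧ sat ψ s
  | .coal C φ, s => ∃ σ ∈ M.toFrame.aja C s, ∀ t ∈ M.toFrame.outC C s σ, sat φ t

/-- M is an X-model (for X ∈ ES). -/
def IsX (X : Set P3) : Prop :=
  (P3.S ∈ X → M.toFrame.Serial) ∧ (P3.I ∈ X → M.toFrame.Independent) ∧
    (P3.D ∈ X → M.toFrame.Deterministic)

end Model

/-- φ is X-valid: φ holds at every pointed X-model. -/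
def XValid {Agent : Type} (X : Set P3) (φ : Formula Agent) : Prop :=
  ∀ M : Model Agent, M.IsX X → ∀ s : M.State, M.sat φ s

/-- φ is X-satisfiable: φ holds at some pointed X-model. -/
def XSat {Agent : Type} (X : Set P3) (φ : Formula Agent) : Prop :=
  ∃ M : Model Agent, M.IsX X ∧ ∃ s : M.State, M.sat φ s

/-- φ ⊨_XL ψ : ψ holds at every pointed X-model at which φ holds. -/
def XConseq {Agent : Type} (X : Set P3) (φ ψ : Formula Agent) : Prop :=
  ∀ M : Model Agent, M.IsX X → ∀ s : M.State, M.sat φ s → M.sat ψ s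

/-- A-Det is valid on deterministic models: ⟨C⟩(φ∨ψ) → (⟨C⟩φ ∨ ⟨AG⟩ψ) holds at
every state of every deterministic general concurrent game model. -/
theorem det_valid_on_deterministic {Agent : Type} [Fintype Agent]
    (M : Model Agent) (hM : M.toFrame.Deterministic) (C : Set Agent)
    (φ ψ : Formula Agent) (s : M.State) :
    M.sat ((Formula.coal C (φ.or ψ)).imp
      ((Formula.coal C φ).or (Formula.coal Set.univ ψ))) s := by
  have sat_or : ∀ (χ θ : Formula Agent) (t : M.State),
      M.sat (χ.or θ) t ↔ M.sat χ t ∨ M.sat θ t := by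
    intro χ θ t
    simp only [Formula.or, Model.sat]
    tauto
  rw [Formula.imp, sat_or, sat_or]
  by_cases h : M.sat (Formula.coal C (φ.or ψ)) s
  · right
    obtain ⟨σ, hσ, hout⟩ := h
    by_cases hφ : ∀ t ∈ M.toFrame.outC C s σ, M.sat φ t
    · exact Or.inl ⟨σ, hσ, hφ⟩
    · right
      push Not at hφ
      obtain ⟨t, ht, htφ⟩ := hφ
      have htψ : M.sat ψ t := ((sat_or φ ψ t).mp (hout t ht)).resolve_left htφ
      simp only [Frame.outC, Set.mem_iUnion] at ht
      obtain ⟨τ, -, hτ⟩ := ht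
      -- The profile `τ` that produced `t`, read as a joint action of the grand coalition.
      have htτ : t ∈ M.toFrame.outC Set.univ s (fun a => τ a.1) := by
        simp only [Frame.outC, Set.mem_iUnion]
        exact ⟨τ, fun _ => rfl, hτ⟩
      obtain ⟨u, hu⟩ := hM s _ ⟨t, htτ⟩
      refine ⟨fun a => τ a.1, ⟨t, htτ⟩, fun v hv => ?_⟩
      rw [hu, Set.mem_singleton_iff] at htτ hv
      rwa [hv, ← htτ]
  · exact Or.inl h

end CL
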